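/- arXiv:2006.00905 — 2 statements merged into one kernel-verified Lean document; each statement's English description precedes it below -/
import Mathlib

section
/- (Isomorphism criterion, Lemma 3.) Let d ≥ 1 and for j = 1, 2 let (x_j, y_j, ε_j) be a triple consisting of permutations x_j, y_j of I_d and an odd sign function ε_j : Î_d → {±1}, with associated maps 𝐱_j, 𝐲_j : Î_d → Î_d given by 𝐱_j(i) = x_j^{sign(i)}(i) and 𝐲_j(i) = ε_j(i) · y_j^{ε_j(i)}(i) · ε_j(y_j^{ε_j(i)}(i)). Let σ be an odd bijection of Î_d, with σ̄(i) = |σ(i)| and δ_σ(i) = sign(σ(i)) for i ∈ I_d. Then σ(𝐱_1(i)) = 𝐱_2(σ(i)) and σ(𝐲_1(i)) = 𝐲_2(σ(i)) hold for all i ∈ Î_d if and only if the following four conditions hold for all i ∈ I_d: (1) δ_σ(x_1(i)) = δ_σ(i); (2) x_2(σ̄(i)) = σ̄(x_1^{δ_σ(i)}(i)); (3) η(i) · η(y_2(i)) = 1, where η(i) := δ_σ(σ̄^{−1}(i)) · ε_1(σ̄^{−1}(i)) · ε_2(i); (4) y_2(σ̄(i)) = σ̄(y_1^{δ_σ(i)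 · ε_1(i) · ε_2(σ̄(i))}(i)). -/
/-- `Î_d`: the set of integers `i` with `1 ≤ |i| ≤ d`. -/
def IdxHat (d : ℤ) : Set ℤ := {i : ℤ | 1 ≤ |i| ∧ |i| ≤ d}

/-- `x^s(i)` for positive `i`: `x i` if `s = 1`, `x⁻¹ i` if `s = -1`. -/
def pApp (x : Equiv.Perm ℤ) (s i : ℤ) : ℤ := if s = 1 then x i else x.symm i

/-- The odd extension of `x^s` to `Î_d`. -/
def sApp (x : Equiv.Perm ℤ) (s i : ℤ) : ℤ :=
  if 0 < i then pApp x s i else -pApp x s (-i)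

/-- `𝐱(i) = x^{sign i}(i)`. -/
def bX (x : Equiv.Perm ℤ) (i : ℤ) : ℤ := if 0 < i then x i else -(x.symm (-i))

/-- `𝐲(i) = ε(i) · y^{ε(i)}(i) · ε(y^{ε(i)}(i))`. -/
def bY (y : Equiv.Perm ℤ) (ε : ℤ → ℤ) (i : ℤ) : ℤ :=
  ε i * sApp y (ε i) i * ε (sApp y (ε i) i)

lemma symm_mem_aux {d : ℤ} {x : Equiv.Perm ℤ} (hx : Set.BijOn x (Set.Icc 1 d) (Set.Icc 1 d))
    {i : ℤ} (hi : i ∈ Set.Icc 1 d) : x.symm i ∈ Set.Icc 1 d := by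
  obtain ⟨j, hj, rfl⟩ := hx.surjOn hi
  simpa using hj

lemma pApp_mem_aux {d : ℤ} {x : Equiv.Perm ℤ} (hx : Set.BijOn x (Set.Icc 1 d) (Set.Icc 1 d))
    (s : ℤ) {i : ℤ} (hi : i ∈ Set.Icc 1 d) : pApp x s i ∈ Set.Icc 1 d := by
  unfold pApp
  split_ifs
  · exact hx.mapsTo hi
  · exact symm_mem_aux hx hi

lemma mem_hat_pos {d i : ℤ} (hi : i ∈ Set.Icc 1 d) : i ∈ IdxHat d := by
  have h1 := hi.1
  have h2 := hi.2
  refine ⟨?_, ?_⟩ <;> rw [abs_of_pos (by omega)] <;> assumption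

lemma mem_hat_neg {d i : ℤ} (hi : i ∈ Set.Icc 1 d) : -i ∈ IdxHat d := by
  have := mem_hat_pos hi
  simpa [IdxHat] using this

lemma hat_cases {d i : ℤ} (hi : i ∈ IdxHat d) :
    i ∈ Set.Icc 1 d ∨ ∃ j ∈ Set.Icc 1 d, i = -j := by
  obtain ⟨h1, h2⟩ := hi
  rcases abs_cases i with ⟨h, h'⟩ | ⟨h, h'⟩
  · left; constructor <;> omega
  · right; exact ⟨-i, ⟨by omega, by omega⟩, by omega⟩

lemma bX_pos {x : Equiv.Perm ℤ} {i : ℤ} (hi : 0 < i) : bX x i = x i := by simp [bX, hi]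

lemma bX_neg {x : Equiv.Perm ℤ} {i : ℤ} (hi : 0 < i) : bX x (-i) = -x.symm i := by
  have : ¬ (i < 0) := by omega
  simp [bX, this]

/-- Intertwining criterion for the `𝐱`-type maps. -/
lemma lemA {d : ℤ} {x₁ x₂ : Equiv.Perm ℤ}
    (hx₁ : Set.BijOn x₁ (Set.Icc 1 d) (Set.Icc 1 d))
    (hx₂ : Set.BijOn x₂ (Set.Icc 1 d) (Set.Icc 1 d))
    (f : ℤ → ℤ) (hf : ∀ i ∈ IdxHat d, f i ∈ IdxHat d) (hodd : ∀ i, f (-i) = -f i) :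
    (∀ i ∈ IdxHat d, f (bX x₁ i) = bX x₂ (f i)) ↔
    (∀ i ∈ Set.Icc (1:ℤ) d, Int.sign (f (x₁ i)) = Int.sign (f i) ∧
      x₂ (|f i|) = |f (pApp x₁ (Int.sign (f i)) i)|) := by
  constructor
  · intro h i hi
    have hp := h i (mem_hat_pos hi)
    have hn := h (-i) (mem_hat_neg hi)
    have hi0 : 0 < i := by have := hi.1; omega
    rw [bX_pos hi0] at hp
    rw [bX_neg hi0, hodd, hodd] at hn
    rcases hat_cases (hf i (mem_hat_pos hi)) with hc | ⟨j, hj, hc⟩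
    · have hc0 : 0 < f i := by have := hc.1; omega
      rw [bX_pos hc0] at hp
      have h2 : 0 < x₂ (f i) := by have := (hx₂.mapsTo hc).1; omega
      rw [abs_of_pos hc0, Int.sign_eq_one_of_pos hc0, pApp, if_pos rfl, hp, abs_of_pos h2,
        Int.sign_eq_one_of_pos h2]
      exact ⟨rfl, rfl⟩
    · have hj0 : 0 < j := by have := hj.1; omega
      rw [hc, bX_neg hj0] at hp
      rw [hc, neg_neg, bX_pos hj0] at hn
      have h2 : 0 < x₂ j := by have := (hx₂.mapsTo hj).1; omega
      have h3 : 0 < x₂.symm j := by have := (symm_mem_aux hx₂ hj).1; omega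
      have h4 : f (x₁.symm i) = -x₂ j := by omega
      have s1 : Int.sign (-j) = -1 := Int.sign_eq_neg_one_of_neg (by omega)
      have s2 : Int.sign (-x₂.symm j) = -1 := Int.sign_eq_neg_one_of_neg (by omega)
      rw [hc, abs_neg, abs_of_pos hj0, s1, pApp,
        if_neg (by norm_num), hp, h4, abs_neg, abs_of_pos h2, s2]
      exact ⟨rfl, rfl⟩
  · intro h
    have key : ∀ i ∈ Set.Icc (1:ℤ) d, f (x₁ i) = bX x₂ (f i) ∧
        f (x₁.symm i) = - bX x₂ (-f i) := by
      intro i hi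
      have hi' := symm_mem_aux hx₁ hi
      have hi'' := hx₁.mapsTo hi
      obtain ⟨a1, a2⟩ := h i hi
      obtain ⟨b1, b2⟩ := h _ hi'
      obtain ⟨c1, c2⟩ := h _ hi''
      rw [Equiv.apply_symm_apply] at b1
      rcases hat_cases (hf i (mem_hat_pos hi)) with hc | ⟨j, hj, hc⟩
      · have hc0 : 0 < f i := by have := hc.1; omega
        rw [Int.sign_eq_one_of_pos hc0] at a1 a2 b1
        have hs := Int.sign_eq_one_iff_pos.1 a1
        have ht := Int.sign_eq_one_iff_pos.1 b1.symm
        rw [← b1] at b2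
        rw [bX_pos hc0, bX_neg hc0]
        simp only [pApp, if_true, Equiv.apply_symm_apply, abs_of_pos hc0, abs_of_pos hs,
          abs_of_pos ht] at a2 b2
        refine ⟨a2.symm, ?_⟩
        rw [← b2]; simp
      · have hj0 : 0 < j := by have := hj.1; omega
        have hc0 : f i < 0 := by omega
        rw [Int.sign_eq_neg_one_of_neg hc0] at a1 a2 b1
        have hs := Int.sign_eq_neg_one_iff_neg.1 a1
        have ht := Int.sign_eq_neg_one_iff_neg.1 b1.symm
        rw [a1] at c2
        have hne : ¬ ((-1:ℤ) = 1) := by norm_num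
        simp only [pApp, if_neg hne, Equiv.symm_apply_apply, abs_of_neg hc0, abs_of_neg hs,
          abs_of_neg ht] at a2 c2
        rw [hc, neg_neg] at a2 c2
        rw [hc, bX_neg hj0, neg_neg, bX_pos hj0]
        refine ⟨?_, by omega⟩
        rw [← c2]; simp
    intro i hi
    rcases hat_cases hi with hi | ⟨j, hj, rfl⟩
    · rw [bX_pos (by have := hi.1; omega)]
      exact (key i hi).1
    · rw [bX_neg (by have := hj.1; omega), hodd, hodd, (key j hj).2, neg_neg]

/-- Two forms of the sign invariance. -/
lemma lemB {d : ℤ} {x : Equiv.Perm ℤ}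
    (hx : Set.BijOn x (Set.Icc 1 d) (Set.Icc 1 d))
    (f : ℤ → ℤ) (hf : ∀ i ∈ Set.Icc 1 d, f i ≠ 0) :
    (∀ i ∈ Set.Icc (1:ℤ) d, Int.sign (f (x i)) = Int.sign (f i)) ↔
    (∀ i ∈ Set.Icc (1:ℤ) d, Int.sign (f (pApp x (Int.sign (f i)) i)) = Int.sign (f i)) := by
  constructor
  · intro h i hi
    unfold pApp
    split_ifs
    · exact h i hi
    · have := h _ (symm_mem_aux hx hi)
      rw [Equiv.apply_symm_apply] at this
      exact this.symm
  · intro h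
    let S : Set ℤ := {i | i ∈ Set.Icc 1 d ∧ 0 < f i}
    have hS : S.Finite := (Set.finite_Icc (1:ℤ) d).subset (fun i hi => hi.1)
    have hm : Set.MapsTo x S S := by
      rintro i ⟨hi, hp⟩
      refine ⟨hx.mapsTo hi, ?_⟩
      have := h i hi
      rw [Int.sign_eq_one_of_pos hp, pApp, if_pos rfl] at this
      exact Int.sign_eq_one_iff_pos.1 this
    have hsurj : Set.SurjOn x S S :=
      (((hS.injOn_iff_bijOn_of_mapsTo hm).1 x.injective.injOn)).surjOn
    intro i hi
    by_cases hp : 0 < f i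
    · rw [Int.sign_eq_one_of_pos hp, Int.sign_eq_one_of_pos (hm ⟨hi, hp⟩).2]
    · have hn : f i < 0 := lt_of_le_of_ne (not_lt.1 hp) (hf i hi)
      have hn' : ¬ 0 < f (x i) := by
        intro hq
        obtain ⟨k, hk, hke⟩ := hsurj (show x i ∈ S from ⟨hx.mapsTo hi, hq⟩)
        rw [x.injective hke] at hk
        exact hp hk.2
      have hn'' : f (x i) < 0 := lt_of_le_of_ne (not_lt.1 hn') (hf _ (hx.mapsTo hi))
      rw [Int.sign_eq_neg_one_of_neg hn, Int.sign_eq_neg_one_of_neg hn'']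

/-- The odd involution `i ↦ i · ε(|i|)`. -/
def eMap (ε : ℤ → ℤ) (i : ℤ) : ℤ := i * ε |i|

lemma eMap_odd (ε : ℤ → ℤ) (i : ℤ) : eMap ε (-i) = -eMap ε i := by simp [eMap]

lemma abs_mem_aux {d i : ℤ} (hi : i ∈ IdxHat d) : |i| ∈ IdxHat d := by
  simpa [IdxHat] using hi

lemma eMap_abs {d : ℤ} {ε : ℤ → ℤ} (hε : ∀ i ∈ IdxHat d, ε i = 1 ∨ ε i = -1)
    {i : ℤ} (hi : i ∈ IdxHat d) : |eMap ε i| = |i| := by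
  rcases hε _ (abs_mem_aux hi) with h | h <;> simp [eMap, h]

lemma eMap_mem {d : ℤ} {ε : ℤ → ℤ} (hε : ∀ i ∈ IdxHat d, ε i = 1 ∨ ε i = -1)
    {i : ℤ} (hi : i ∈ IdxHat d) : eMap ε i ∈ IdxHat d := by
  have := eMap_abs hε hi
  unfold IdxHat at *
  simpa [this] using hi

lemma eMap_invol {d : ℤ} {ε : ℤ → ℤ} (hε : ∀ i ∈ IdxHat d, ε i = 1 ∨ ε i = -1)
    {i : ℤ} (hi : i ∈ IdxHat d) : eMap ε (eMap ε i) = i := by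
  have h1 := eMap_abs hε hi
  rw [eMap, h1, eMap]
  rcases hε _ (abs_mem_aux hi) with h | h <;> simp [h]

lemma bX_mem {d : ℤ} {x : Equiv.Perm ℤ} (hx : Set.BijOn x (Set.Icc 1 d) (Set.Icc 1 d))
    {i : ℤ} (hi : i ∈ IdxHat d) : bX x i ∈ IdxHat d := by
  rcases hat_cases hi with hi | ⟨j, hj, rfl⟩
  · rw [bX_pos (by have := hi.1; omega)]
    exact mem_hat_pos (hx.mapsTo hi)
  · rw [bX_neg (by have := hj.1; omega)]
    exact mem_hat_neg (symm_mem_aux hx hj)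

lemma bY_eq {d : ℤ} {y : Equiv.Perm ℤ} (hy : Set.BijOn y (Set.Icc 1 d) (Set.Icc 1 d))
    {ε : ℤ → ℤ} (hodd : ∀ i, ε (-i) = -ε i) (hε : ∀ i ∈ IdxHat d, ε i = 1 ∨ ε i = -1)
    {i : ℤ} (hi : i ∈ IdxHat d) : bY y ε i = eMap ε (bX y (eMap ε i)) := by
  have hne : ¬ ((-1:ℤ) = 1) := by norm_num
  rcases hat_cases hi with hi | ⟨j, hj, rfl⟩
  · have h0 : 0 < i := by have := hi.1; omega
    have h1 : 0 < y i := by have := (hy.mapsTo hi).1; omega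
    have h2 : 0 < y.symm i := by have := (symm_mem_aux hy hi).1; omega
    rcases hε _ (mem_hat_pos hi) with h | h
    · have e : eMap ε i = i := by simp [eMap, abs_of_pos h0, h]
      rw [e, bX_pos h0, bY, h, sApp, if_pos h0, pApp, if_pos rfl, eMap, abs_of_pos h1]
      ring
    · have e : eMap ε i = -i := by simp [eMap, abs_of_pos h0, h]
      rw [e, bX_neg h0, bY, h, sApp, if_pos h0, pApp, if_neg hne, eMap, abs_neg, abs_of_pos h2]
      ring
  · have h0 : 0 < j := by have := hj.1; omega
    have h0' : ¬ 0 < -j := by omega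
    have h1 : 0 < y j := by have := (hy.mapsTo hj).1; omega
    have h2 : 0 < y.symm j := by have := (symm_mem_aux hy hj).1; omega
    rcases hε _ (mem_hat_pos hj) with h | h
    · have e : eMap ε (-j) = -j := by simp [eMap, abs_of_pos h0, h]
      rw [e, bX_neg h0, bY, hodd, h, sApp, if_neg h0', pApp, if_neg hne, eMap, abs_neg,
        abs_of_pos h2, neg_neg, hodd]
      ring
    · have e : eMap ε (-j) = j := by simp [eMap, abs_of_pos h0, h]
      rw [e, bX_pos h0, bY, hodd, h, sApp, if_neg h0', pApp, neg_neg, if_pos rfl, eMap,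
        abs_of_pos h1, hodd]
      ring

/-- Isomorphism criterion (Lemma 3): `σ ∘ 𝐱₁ = 𝐱₂ ∘ σ` and `σ ∘ 𝐲₁ = 𝐲₂ ∘ σ` on `Î_d`
iff the four conditions (1)–(4) hold on `I_d`.  Here `σ̄ i = |σ i|`, `δ_σ i = sign (σ i)`,
`σbi` is the inverse of the permutation `σ̄` of `I_d`, and
`η i = δ_σ(σ̄⁻¹ i) · ε₁(σ̄⁻¹ i) · ε₂ i`. -/
theorem stmt5 (d : ℤ) (hd : 1 ≤ d)
    (x₁ x₂ y₁ y₂ : Equiv.Perm ℤ)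
    (hx₁ : Set.BijOn x₁ (Set.Icc 1 d) (Set.Icc 1 d))
    (hx₂ : Set.BijOn x₂ (Set.Icc 1 d) (Set.Icc 1 d))
    (hy₁ : Set.BijOn y₁ (Set.Icc 1 d) (Set.Icc 1 d))
    (hy₂ : Set.BijOn y₂ (Set.Icc 1 d) (Set.Icc 1 d))
    (ε₁ ε₂ : ℤ → ℤ)
    (hε₁odd : ∀ i : ℤ, ε₁ (-i) = -ε₁ i) (hε₁ : ∀ i ∈ IdxHat d, ε₁ i = 1 ∨ ε₁ i = -1)
    (hε₂odd : ∀ i : ℤ, ε₂ (-i) = -ε₂ i) (hε₂ : ∀ i ∈ IdxHat d, ε₂ i = 1 ∨ ε₂ i = -1)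
    (σ : Equiv.Perm ℤ) (hσ : Set.BijOn σ (IdxHat d) (IdxHat d))
    (hσodd : ∀ i : ℤ, σ (-i) = -σ i)
    (σbi : ℤ → ℤ)
    (hσbi : ∀ i ∈ Set.Icc (1:ℤ) d, σbi (|σ i|) = i ∧ |σ (σbi i)| = i) :
    (∀ i ∈ IdxHat d, σ (bX x₁ i) = bX x₂ (σ i) ∧ σ (bY y₁ ε₁ i) = bY y₂ ε₂ (σ i))
    ↔ (∀ i ∈ Set.Icc (1:ℤ) d,
        Int.sign (σ (x₁ i)) = Int.sign (σ i)
        ∧ x₂ (|σ i|) = |σ (pApp x₁ (Int.sign (σ i)) i)|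
        ∧ (Int.sign (σ (σbi i)) * ε₁ (σbi i) * ε₂ i)
            * (Int.sign (σ (σbi (y₂ i))) * ε₁ (σbi (y₂ i)) * ε₂ (y₂ i)) = 1
        ∧ y₂ (|σ i|) = |σ (pApp y₁ (Int.sign (σ i) * ε₁ i * ε₂ (|σ i|)) i)|) := by
  let f : ℤ → ℤ := fun i => eMap ε₂ (σ (eMap ε₁ i))
  have hfmem : ∀ i ∈ IdxHat d, f i ∈ IdxHat d := fun i hi =>
    eMap_mem hε₂ (hσ.mapsTo (eMap_mem hε₁ hi))
  have hfodd : ∀ i, f (-i) = -f i := by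
    intro i
    simp only [f, eMap_odd, hσodd]
  have hY : (∀ i ∈ IdxHat d, σ (bY y₁ ε₁ i) = bY y₂ ε₂ (σ i)) ↔
      (∀ i ∈ IdxHat d, f (bX y₁ i) = bX y₂ (f i)) := by
    constructor
    · intro h i hi
      have h1 := eMap_mem hε₁ hi
      have h2 := h _ h1
      rw [bY_eq hy₁ hε₁odd hε₁ h1, bY_eq hy₂ hε₂odd hε₂ (hσ.mapsTo h1), eMap_invol hε₁ hi] at h2
      show eMap ε₂ (σ (eMap ε₁ (bX y₁ i))) = _
      rw [h2]
      exact eMap_invol hε₂ (bX_mem hy₂ (hfmem i hi))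
    · intro h i hi
      have h1 := eMap_mem hε₁ hi
      have h2 := h _ h1
      have h3 : f (eMap ε₁ i) = eMap ε₂ (σ i) := by simp only [f, eMap_invol hε₁ hi]
      rw [h3] at h2
      rw [bY_eq hy₁ hε₁odd hε₁ hi, bY_eq hy₂ hε₂odd hε₂ (hσ.mapsTo hi), ← h2]
      exact (eMap_invol hε₂ (hσ.mapsTo (eMap_mem hε₁ (bX_mem hy₁ h1)))).symm
  have habs : ∀ i ∈ Set.Icc (1:ℤ) d, |f i| = |σ i| := by
    intro i hi
    have h0 : 0 < i := by have := hi.1; omega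
    have h1 := mem_hat_pos hi
    show |eMap ε₂ (σ (eMap ε₁ i))| = _
    rw [eMap_abs hε₂ (hσ.mapsTo (eMap_mem hε₁ h1)), eMap, abs_of_pos h0]
    rcases hε₁ _ h1 with h | h <;> simp [h, hσodd]
  have hsign : ∀ i ∈ Set.Icc (1:ℤ) d,
      Int.sign (f i) = Int.sign (σ i) * ε₁ i * ε₂ |σ i| := by
    intro i hi
    have h0 : 0 < i := by have := hi.1; omega
    have h1 := mem_hat_pos hi
    simp only [f, eMap, abs_of_pos h0]
    rcases hε₁ _ h1 with h | h <;>
    rcases hε₂ _ (abs_mem_aux (hσ.mapsTo h1)) with h' | h' <;> simp [h, h', hσodd]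
  have hf0 : ∀ i ∈ Set.Icc (1:ℤ) d, f i ≠ 0 := by
    intro i hi h
    have := (hfmem i (mem_hat_pos hi)).1
    rw [h] at this
    norm_num at this
  have hσI : ∀ i ∈ Set.Icc (1:ℤ) d, |σ i| ∈ Set.Icc (1:ℤ) d := fun i hi =>
    hσ.mapsTo (mem_hat_pos hi)
  have hσsurj : ∀ i ∈ Set.Icc (1:ℤ) d, ∃ j ∈ Set.Icc (1:ℤ) d, |σ j| = i := by
    intro i hi
    have h0 : 0 < i := by have := hi.1; omega
    obtain ⟨j, hj, hji⟩ := hσ.surjOn (mem_hat_pos hi)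
    rcases hat_cases hj with hj | ⟨k, hk, rfl⟩
    · exact ⟨j, hj, by rw [hji, abs_of_pos h0]⟩
    · refine ⟨k, hk, ?_⟩
      rw [hσodd] at hji
      rw [← abs_neg, hji, abs_of_pos h0]
  have hX := lemA hx₁ hx₂ σ (fun i hi => hσ.mapsTo hi) hσodd
  have hY2 := lemA hy₁ hy₂ f hfmem hfodd
  have hB := lemB hy₁ f hf0
  -- condition (4) in terms of `f`
  have h4 : ∀ i ∈ Set.Icc (1:ℤ) d, (y₂ (|f i|) = |f (pApp y₁ (Int.sign (f i)) i)| ↔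
      y₂ (|σ i|) = |σ (pApp y₁ (Int.sign (σ i) * ε₁ i * ε₂ (|σ i|)) i)|) := by
    intro i hi
    rw [habs i hi, habs _ (pApp_mem_aux hy₁ _ hi), hsign i hi]
  -- condition (3) in terms of `f`, at the point `|σ j|`
  have h3 : ∀ j ∈ Set.Icc (1:ℤ) d, y₂ (|f j|) = |f (pApp y₁ (Int.sign (f j)) j)| →
      (Int.sign (f (pApp y₁ (Int.sign (f j)) j)) = Int.sign (f j) ↔
       (Int.sign (σ (σbi |σ j|)) * ε₁ (σbi |σ j|) * ε₂ |σ j|)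
            * (Int.sign (σ (σbi (y₂ |σ j|))) * ε₁ (σbi (y₂ |σ j|)) * ε₂ (y₂ |σ j|)) = 1) := by
    intro j hj h
    have hk := pApp_mem_aux hy₁ (Int.sign (f j)) hj
    rw [habs j hj, habs _ hk] at h
    rw [h, (hσbi j hj).1, (hσbi _ hk).1, ← hsign j hj, ← hsign _ hk]
    rcases lt_or_gt_of_ne (hf0 _ hj) with a | a <;>
    rcases lt_or_gt_of_ne (hf0 _ hk) with b | b <;>
    simp only [Int.sign_eq_one_of_pos, Int.sign_eq_neg_one_of_neg, a] at b ⊢ <;>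
    simp [Int.sign_eq_one_of_pos, Int.sign_eq_neg_one_of_neg, b]
  constructor
  · intro h
    have hx := hX.1 (fun i hi => (h i hi).1)
    have hy := hY2.1 (hY.1 (fun i hi => (h i hi).2))
    have hb := hB.1 (fun i hi => (hy i hi).1)
    intro i hi
    refine ⟨(hx i hi).1, (hx i hi).2, ?_, (h4 i hi).1 (hy i hi).2⟩
    obtain ⟨j, hj, rfl⟩ := hσsurj i hi
    exact (h3 j hj (hy j hj).2).1 (hb j hj)
  · intro h
    have hx := hX.2 (fun i hi => ⟨(h i hi).1, (h i hi).2.1⟩)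
    have hy2 : ∀ i ∈ Set.Icc (1:ℤ) d, y₂ (|f i|) = |f (pApp y₁ (Int.sign (f i)) i)| :=
      fun i hi => (h4 i hi).2 (h i hi).2.2.2
    have hb := hB.2 (fun j hj => (h3 j hj (hy2 j hj)).2 (h _ (hσI j hj)).2.2.1)
    have hy := hY.2 (hY2.2 (fun i hi => ⟨hb i hi, hy2 i hi⟩))
    exact fun i hi => ⟨hx i hi, hy i hi⟩
end

section
/- Let d ≥ 1 and for j = 1, 2 let x_j be a permutation of I_d with associated map 𝐱_j : Î_d → Î_d given by 𝐱_j(i) = x_j^{sign(i)}(i). Let σ be an odd bijection of Î_d, with σ̄(i) = |σ(i)| and δ_σ(i) = sign(σ(i)) for i ∈ I_d. Then σ(𝐱_1(i)) = 𝐱_2(σ(i)) holds for all i ∈ Î_d if and only if the following two conditions hold for all i ∈ I_d: (1) δ_σ(x_1(i)) = δ_σ(i); (2) x_2(σ̄(i)) = σ̄(x_1^{δ_σ(i)}(i)). -/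
/-- `σ ∘ 𝐱₁ = 𝐱₂ ∘ σ` on `Î_d` iff conditions (1) and (2) hold on `I_d`,
where `σ̄ i = |σ i|` and `δ_σ i = sign (σ i)`. -/
theorem stmt6 (d : ℤ) (hd : 1 ≤ d)
    (x₁ x₂ : Equiv.Perm ℤ)
    (hx₁ : Set.BijOn x₁ (Set.Icc 1 d) (Set.Icc 1 d))
    (hx₂ : Set.BijOn x₂ (Set.Icc 1 d) (Set.Icc 1 d))
    (σ : Equiv.Perm ℤ) (hσ : Set.BijOn σ (IdxHat d) (IdxHat d))
    (hσodd : ∀ i : ℤ, σ (-i) = -σ i) :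
    (∀ i ∈ IdxHat d, σ (bX x₁ i) = bX x₂ (σ i))
    ↔ (∀ i ∈ Set.Icc (1:ℤ) d,
        Int.sign (σ (x₁ i)) = Int.sign (σ i)
        ∧ x₂ (|σ i|) = |σ (pApp x₁ (Int.sign (σ i)) i)|) := by
  have symm_mem : ∀ x : Equiv.Perm ℤ, Set.BijOn x (Set.Icc 1 d) (Set.Icc 1 d) →
      ∀ i, 1 ≤ i → i ≤ d → 1 ≤ x.symm i ∧ x.symm i ≤ d := by
    intro x hx i h1 h2
    obtain ⟨j, hj, rfl⟩ := hx.surjOn (show i ∈ Set.Icc 1 d from ⟨h1, h2⟩)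
    simpa using hj
  have m1 : ∀ i, 1 ≤ i → i ≤ d → 1 ≤ x₁ i ∧ x₁ i ≤ d := fun i h1 h2 => hx₁.mapsTo ⟨h1, h2⟩
  have m2 : ∀ i, 1 ≤ i → i ≤ d → 1 ≤ x₂ i ∧ x₂ i ≤ d := fun i h1 h2 => hx₂.mapsTo ⟨h1, h2⟩
  have s1 := symm_mem x₁ hx₁
  have s2 := symm_mem x₂ hx₂
  have ms : ∀ i, 1 ≤ i → i ≤ d → (1 ≤ σ i ∧ σ i ≤ d) ∨ (1 ≤ -σ i ∧ -σ i ≤ d) := by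
    intro i h1 h2
    have h : 1 ≤ |σ i| ∧ |σ i| ≤ d :=
      hσ.mapsTo (show 1 ≤ |i| ∧ |i| ≤ d by rw [abs_of_pos (by omega)]; exact ⟨h1, h2⟩)
    rcases abs_cases (σ i) with ⟨h3, _⟩ | ⟨h3, _⟩ <;> rw [h3] at h
    · exact Or.inl h
    · exact Or.inr h
  constructor
  · intro H i hi
    obtain ⟨h1, h2⟩ := hi
    have A := H i (show 1 ≤ |i| ∧ |i| ≤ d by rw [abs_of_pos (by omega)]; exact ⟨h1, h2⟩)
    have B := H (-i) (show 1 ≤ |-i| ∧ |-i| ≤ d by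
      rw [abs_neg, abs_of_pos (by omega)]; exact ⟨h1, h2⟩)
    unfold bX at A B
    rw [if_pos (by omega)] at A
    rw [if_neg (by omega), hσodd, hσodd, neg_neg] at B
    rcases ms i h1 h2 with ⟨h3, h4⟩ | ⟨h3, h4⟩
    · rw [if_pos (by omega)] at A
      have h5 := m2 _ h3 h4
      rw [Int.sign_eq_one_of_pos (by omega : 0 < σ i), Int.sign_eq_one_of_pos (by omega)]
      refine ⟨rfl, ?_⟩
      rw [pApp, if_pos rfl, abs_of_pos (by omega), abs_of_pos (by omega), A]
    · rw [if_neg (by omega)] at A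
      rw [if_pos (by omega)] at B
      have h5 := s2 _ h3 h4
      have h6 := m2 _ h3 h4
      rw [Int.sign_eq_neg_one_of_neg (by omega : σ i < 0), Int.sign_eq_neg_one_of_neg (by omega)]
      refine ⟨rfl, ?_⟩
      rw [pApp, if_neg (by decide), abs_of_neg (by omega), abs_of_neg (by omega), B]
  · intro H
    -- consequences of (1) and (2), by the sign of `σ i`
    have P : ∀ i, 1 ≤ i → i ≤ d → 0 < σ i → 0 < σ (x₁ i) ∧ x₂ (σ i) = σ (x₁ i) := by
      intro i h1 h2 h3
      obtain ⟨a, b⟩ := H i ⟨h1, h2⟩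
      rw [Int.sign_eq_one_of_pos h3] at a b
      have h4 := Int.sign_eq_one_iff_pos.1 a
      rw [pApp, if_pos rfl, abs_of_pos h3, abs_of_pos h4] at b
      exact ⟨h4, b⟩
    have N0 : ∀ i, 1 ≤ i → i ≤ d → (σ i < 0 ↔ σ (x₁ i) < 0) := by
      intro i h1 h2
      obtain ⟨a, b⟩ := H i ⟨h1, h2⟩
      rw [← Int.sign_eq_neg_one_iff_neg, ← Int.sign_eq_neg_one_iff_neg, a]
    have N : ∀ i, 1 ≤ i → i ≤ d → σ i < 0 → x₂ (-σ i) = -σ (x₁.symm i) := by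
      intro i h1 h2 h3
      obtain ⟨a, b⟩ := H i ⟨h1, h2⟩
      have h5 := s1 i h1 h2
      have h4 := (N0 _ h5.1 h5.2).2 (by rwa [Equiv.apply_symm_apply])
      rw [Int.sign_eq_neg_one_of_neg h3, pApp, if_neg (by decide), abs_of_neg h3,
        abs_of_neg h4] at b
      exact b
    have pos : ∀ i, 1 ≤ i → i ≤ d → σ (x₁ i) = bX x₂ (σ i) := by
      intro i h1 h2
      unfold bX
      split_ifs with h
      · exact (P i h1 h2 h).2.symm
      · have h3 : σ i < 0 := by rcases ms i h1 h2 with h | h <;> omega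
        have h5 := m1 i h1 h2
        have := N (x₁ i) h5.1 h5.2 ((N0 i h1 h2).1 h3)
        rw [Equiv.symm_apply_apply] at this
        rw [← this, Equiv.symm_apply_apply, neg_neg]
    have neg : ∀ i, 1 ≤ i → i ≤ d → -σ (x₁.symm i) = bX x₂ (-σ i) := by
      intro i h1 h2
      unfold bX
      split_ifs with h
      · exact (N i h1 h2 (by omega)).symm
      · have h3 : 0 < σ i := by rcases ms i h1 h2 with h | h <;> omega
        have h5 := s1 i h1 h2
        have h6 : 0 < σ (x₁.symm i) := by
          have := N0 _ h5.1 h5.2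
          rw [Equiv.apply_symm_apply] at this
          rcases ms _ h5.1 h5.2 with h | h <;> omega
        have := (P _ h5.1 h5.2 h6).2
        rw [Equiv.apply_symm_apply] at this
        rw [neg_neg, ← this, Equiv.symm_apply_apply]
    intro i hi
    obtain ⟨h1, h2⟩ := (hi : 1 ≤ |i| ∧ |i| ≤ d)
    by_cases h : 0 < i
    · rw [abs_of_pos h] at h1 h2
      rw [show bX x₁ i = x₁ i from if_pos h]
      exact pos i h1 h2
    · rw [abs_of_nonpos (by omega)] at h1 h2
      rw [show bX x₁ i = -(x₁.symm (-i)) from if_neg h, hσodd]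
      have := neg (-i) h1 h2
      rwa [hσodd i, neg_neg] at this
end
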